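/- Let G = ⟨X | R⟩ be any finitely presented group and let M > 0 be the length of the longest defining relation in R. Then for all n ∈ ℕ, CL(n) ≤ n/2 + M·Ann(n). -/

import Mathlib

namespace AnnDehn

/-- A word over the alphabet `X`: a list of letters together with exponents `±1`
(`true` = the letter itself, `false` = its inverse). -/
abbrev Word (X : Type*) := List (X × Bool)

/-- `IsProdOfConjRels R k g` : the free group element `g` is freely equal to a product
of `k` conjugates of relators in `R` or of their inverses. -/
def IsProdOfConjRels {X : Type*} (R : Set (FreeGroup X)) (k : ℕ) (g : FreeGroup X) : Prop :=
  ∃ (w r : Fin k → FreeGroup X) (ε : Fin k → ℤ),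
    (∀ i, r i ∈ R) ∧ (∀ i, ε i = 1 ∨ ε i = -1) ∧
      g = (List.ofFn (fun i => w i * (r i) ^ (ε i) * (w i)⁻¹)).prod

/-- The (combinatorial) area of a free group element with respect to the relators `R`:
the least number of conjugates of relators (or their inverses) whose product is freely
equal to `g`. -/
noncomputable def area {X : Type*} (R : Set (FreeGroup X)) (g : FreeGroup X) : ℕ :=
  sInf {k | IsProdOfConjRels R k g}

/-- The canonical projection from the free group onto the presented group `⟨X ∣ R⟩`. -/
def proj {X : Type*} (R : Set (FreeGroup X)) : FreeGroup X →* PresentedGroup R :=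
  PresentedGroup.mk R

/-- The Dehn function of the presentation `⟨X ∣ R⟩`:
`dehn R n = max {area w : |w| ≤ n, w = 1 in ⟨X ∣ R⟩}`. -/
noncomputable def dehn {X : Type*} (R : Set (FreeGroup X)) (n : ℕ) : ℕ :=
  sSup {A | ∃ w : Word X, w.length ≤ n ∧ proj R (FreeGroup.mk w) = 1 ∧
      A = area R (FreeGroup.mk w)}

/-- The conjugator length function of a group `G` marked by a map `φ` from a free group:
the least `N` such that any two words `u`, `v` of total length at most `n` representing
conjugate elements of `G` admit a conjugating word of length at most `N`. -/
noncomputable def conjLength {X G : Type*} [Group G] (φ : FreeGroup X →* G) (n : ℕ) : ℕ :=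
  sInf {N | ∀ u v : Word X, u.length + v.length ≤ n →
      IsConj (φ (FreeGroup.mk u)) (φ (FreeGroup.mk v)) →
      ∃ w : Word X, w.length ≤ N ∧
        φ (FreeGroup.mk w) * φ (FreeGroup.mk u) * (φ (FreeGroup.mk w))⁻¹ = φ (FreeGroup.mk v)}

/-- The conjugator length function of the presentation `⟨X ∣ R⟩`. -/
noncomputable def CL {X : Type*} (R : Set (FreeGroup X)) (n : ℕ) : ℕ :=
  conjLength (proj R) n

/-- `annPair R u v` : the annular area of the pair `u`, `v`, i.e. the minimum of
`area (γ * u * γ⁻¹ * v⁻¹)` over all conjugators `γ` with `γuγ⁻¹ = v` in `⟨X ∣ R⟩`. -/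
noncomputable def annPair {X : Type*} (R : Set (FreeGroup X)) (u v : FreeGroup X) : ℕ :=
  sInf {A | ∃ γ : FreeGroup X, proj R (γ * u * γ⁻¹) = proj R v ∧
      A = area R (γ * u * γ⁻¹ * v⁻¹)}

/-- The annular Dehn function of the presentation `⟨X ∣ R⟩`. -/
noncomputable def ann {X : Type*} (R : Set (FreeGroup X)) (n : ℕ) : ℕ :=
  sSup {A | ∃ u v : Word X, u.length + v.length ≤ n ∧
      IsConj (proj R (FreeGroup.mk u)) (proj R (FreeGroup.mk v)) ∧
      A = annPair R (FreeGroup.mk u) (FreeGroup.mk v)}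

/-- `f ≼ g` : there is a constant `C > 0` with `f n ≤ C * g (C*n + n) + C*n + C`
for all `n`. -/
def Dominates (f g : ℕ → ℕ) : Prop :=
  ∃ C : ℕ, 0 < C ∧ ∀ n, f n ≤ C * g (C * n + n) + C * n + C

/-- `f ≃ g` : `f ≼ g` and `g ≼ f`. -/
def Equivalent (f g : ℕ → ℕ) : Prop := Dominates f g ∧ Dominates g f

/-!
Write `F` for the free group on `X` and `G = ⟨X ∣ R⟩`, and suppose `γ u γ⁻¹ v⁻¹` is freely equal to
a product of `A` conjugates `wᵢ ρᵢ wᵢ⁻¹` of relators or their inverses. Let `H ≤ F` be the preimage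
of `⟨v⟩ ≤ G`, and `c` the base point of the Schreier graph on `F ⧸ H`. There `v` labels a loop at
`c`, `u` a loop at `γ⁻¹c`, and `ρᵢ` a loop at `wᵢ⁻¹c`. A path from `γ⁻¹c` to `c` labelled `p`
satisfies `p = vᵐγ` in `G` for some `m`, so `p` conjugates `u` to `v`; it remains to find a short
path.

Starting with the loop of `v`, adjoin relator loops that meet those already collected, as long as
possible. A loop of length `ℓ` has all its vertices within `ℓ/2` of its base point, so the
resulting vertex set `S` lies within `|v|/2 + M·A` of `c`. If the loop of `u` meets `S`, there is a
path of length at most `|u|/2 + |v|/2 + M·A`.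

Otherwise `u` stays outside `S`, `v` stays inside, and each `ρᵢ` does one or the other. Label every
edge starting in `S` by the element of `G` its letter represents and every other edge by `1`, and
let `F` act on `(F ⧸ H) × G` by following edges and multiplying by their labels. Then `γuγ⁻¹` and
all `wᵢρᵢwᵢ⁻¹` fix the fibre over `c` pointwise, hence so does `v`; but `v` multiplies that fibre by
its own image in `G`. So `v = 1` in `G`, and the empty word is a conjugator. This replaces the
planar topology of annular diagrams.
-/

section SchreierGraph

/-! ### Paths in Schreier graphs -/

variable {X Q : Type*} [MulAction (FreeGroup X) Q]

/-- The vertices on the path labelled `L` that starts at `c` in the Schreier graph of the action of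
the free group on `Q`. Words act from the left, so the path reads `L` from its last letter, and its
vertices are the images of `c` under the suffixes of `L`. -/
def pathVertices (L : Word X) (c : Q) : Set Q :=
  {d | ∃ L' : Word X, L' <:+ L ∧ FreeGroup.mk L' • c = d}

/-- In the Schreier graph on `Q` some path from `c` to `d` has length at most `N`. -/
def ReachableWithin (X : Type*) {Q : Type*} [MulAction (FreeGroup X) Q] (N : ℕ) (c d : Q) : Prop :=
  ∃ L : Word X, L.length ≤ N ∧ FreeGroup.mk L • c = d

lemma smul_mem_pathVertices (L : Word X) (c : Q) : FreeGroup.mk L • c ∈ pathVertices L c :=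
  ⟨L, List.suffix_rfl, rfl⟩

lemma pathVertices_subset_cons (s : X × Bool) (L : Word X) (c : Q) :
    pathVertices L c ⊆ pathVertices (s :: L) c := by
  rintro d ⟨L', hL', rfl⟩
  exact ⟨L', hL'.trans (List.suffix_cons s L), rfl⟩

namespace ReachableWithin

variable {N N' : ℕ} {c d e : Q}

lemma mono (h : ReachableWithin X N c d) (hN : N ≤ N') : ReachableWithin X N' c d := by
  obtain ⟨L, hL, hcd⟩ := h
  exact ⟨L, hL.trans hN, hcd⟩

lemma symm (h : ReachableWithin X N c d) : ReachableWithin X N d c := by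
  obtain ⟨L, hL, rfl⟩ := h
  refine ⟨FreeGroup.invRev L, by rwa [FreeGroup.invRev_length], ?_⟩
  rw [← FreeGroup.inv_mk, inv_smul_smul]

lemma trans (h : ReachableWithin X N c d) (h' : ReachableWithin X N' d e) :
    ReachableWithin X (N + N') c e := by
  obtain ⟨L, hL, rfl⟩ := h
  obtain ⟨L', hL', rfl⟩ := h'
  refine ⟨L' ++ L, by rw [List.length_append]; omega, ?_⟩
  rw [← FreeGroup.mul_mk, mul_smul]

/-- A loop can be followed in either direction, one of which takes at most half of it. -/
lemma of_mem_loop {L : Word X} (hloop : FreeGroup.mk L • c = c) (hd : d ∈ pathVertices L c) :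
    ReachableWithin X (L.length / 2) c d := by
  obtain ⟨L₂, ⟨L₁, rfl⟩, rfl⟩ := hd
  rw [← FreeGroup.mul_mk, mul_smul] at hloop
  rw [List.length_append]
  rcases le_total L₂.length L₁.length with h | h
  · exact ⟨L₂, by omega, rfl⟩
  · have back : ReachableWithin X L₁.length (FreeGroup.mk L₂ • c) c := ⟨L₁, le_rfl, hloop⟩
    exact back.symm.mono (by omega)

lemma of_mem_loop_of_mem_loop {L : Word X} (hloop : FreeGroup.mk L • c = c)
    (hd : d ∈ pathVertices L c) (he : e ∈ pathVertices L c) :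
    ReachableWithin X L.length d e :=
  ((of_mem_loop hloop hd).symm.trans (of_mem_loop hloop he)).mono (by omega)

end ReachableWithin

lemma exists_saturated_superset {ι : Type*} {P : ι → Set Q} {M : ℕ} {c : Q} (s : Finset ι)
    (hP : ∀ i ∈ s, ∀ d ∈ P i, ∀ e ∈ P i, ReachableWithin X M d e) {B : Set Q} {N : ℕ}
    (hB : ∀ d ∈ B, ReachableWithin X N c d) :
    ∃ S, B ⊆ S ∧ (∀ i ∈ s, P i ⊆ S ∨ Disjoint (P i) S) ∧
      ∀ d ∈ S, ReachableWithin X (N + M * s.card) c d := by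
  classical
  induction s using Finset.strongInduction generalizing B N with
  | H s ih =>
    by_cases hdisj : ∀ i ∈ s, Disjoint (P i) B
    · exact ⟨B, subset_rfl, fun i hi ↦ .inr (hdisj i hi),
        fun d hd ↦ (hB d hd).mono (Nat.le_add_right _ _)⟩
    push Not at hdisj
    obtain ⟨i, hi, hmeet⟩ := hdisj
    obtain ⟨b, hbP, hbB⟩ := Set.not_disjoint_iff.1 hmeet
    have hBP : ∀ d ∈ B ∪ P i, ReachableWithin X (N + M) c d := by
      rintro d (hd | hd)
      · exact (hB d hd).mono (Nat.le_add_right _ _)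
      · exact (hB b hbB).trans (hP i hi b hbP d hd)
    obtain ⟨S, hBS, hsep, hreach⟩ := ih (s.erase i) (Finset.erase_ssubset hi)
      (fun j hj ↦ hP j (Finset.mem_of_mem_erase hj)) hBP
    refine ⟨S, Set.subset_union_left.trans hBS, fun j hj ↦ ?_, fun d hd ↦ ?_⟩
    · rcases eq_or_ne j i with rfl | hji
      · exact .inl (Set.subset_union_right.trans hBS)
      · exact hsep j (Finset.mem_erase.2 ⟨hji, hj⟩)
    · have hcard : N + M * s.card = N + M + M * (s.erase i).card := by
        rw [← Finset.card_erase_add_one hi]; ring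
      exact hcard ▸ hreach d hd

/-! ### Actions twisted by an edge labelling -/

section Labelling

variable {A : Type*} [Group A]

/-- The action of the free group on `Q × A` determined by a labelling of the edges of the Schreier
graph on `Q` by elements of the group `A` (the derived graph of a voltage graph): a generator `x`
moves `q` along its `x`-edge and multiplies the `A`-coordinate by the label `α x q` of that edge. -/
def twistedAction (α : X → Q → A) : FreeGroup X →* Equiv.Perm (Q × A) :=
  FreeGroup.lift fun x ↦
    (MulAction.toPerm (FreeGroup.of x)).prodShear fun q ↦ Equiv.mulLeft (α x q)

/-- The elements of the free group that fix every point of the fibre `{c} × A` under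
`twistedAction α`. -/
def fibreFixer (α : X → Q → A) (c : Q) : Subgroup (FreeGroup X) :=
  ⨅ a : A, (MulAction.stabilizer (Equiv.Perm (Q × A)) (c, a)).comap (twistedAction α)

variable {α : X → Q → A} {c : Q}

lemma mem_fibreFixer {g : FreeGroup X} :
    g ∈ fibreFixer α c ↔ ∀ a, twistedAction α g (c, a) = (c, a) := by
  simp [fibreFixer, Subgroup.mem_iInf]

lemma twistedAction_of_apply (x : X) (q : Q) (a : A) :
    twistedAction α (FreeGroup.of x) (q, a) = (FreeGroup.of x • q, α x q * a) := by
  simp [twistedAction]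

lemma twistedAction_of_inv_apply (x : X) (q : Q) (a : A) :
    twistedAction α (FreeGroup.of x)⁻¹ (q, a) =
      ((FreeGroup.of x)⁻¹ • q, (α x ((FreeGroup.of x)⁻¹ • q))⁻¹ * a) := by
  rw [map_inv, Equiv.Perm.inv_eq_iff_eq, twistedAction_of_apply, smul_inv_smul, mul_inv_cancel_left]

lemma twistedAction_apply_fst (g : FreeGroup X) (p : Q × A) :
    (twistedAction α g p).1 = g • p.1 := by
  induction g using FreeGroup.induction_on generalizing p with
  | C1 => simp
  | of x => rw [twistedAction_of_apply]
  | inv_of x _ => rw [twistedAction_of_inv_apply]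
  | mul g h ihg ihh => rw [map_mul, Equiv.Perm.mul_apply, ihg, ihh, mul_smul]

lemma conj_mem_fibreFixer {w g : FreeGroup X} (hg : g ∈ fibreFixer α (w⁻¹ • c)) :
    w * g * w⁻¹ ∈ fibreFixer α c := by
  rw [mem_fibreFixer] at hg ⊢
  intro a
  obtain ⟨b, hb⟩ : ∃ b, twistedAction α w⁻¹ (c, a) = (w⁻¹ • c, b) :=
    ⟨_, Prod.ext (twistedAction_apply_fst _ _) rfl⟩
  rw [map_mul, map_mul, Equiv.Perm.mul_apply, Equiv.Perm.mul_apply, hb, hg, ← hb,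
    ← Equiv.Perm.mul_apply, ← map_mul, mul_inv_cancel, map_one, Equiv.Perm.one_apply]

lemma twistedAction_mk_of_label_eq {ψ : FreeGroup X →* A} (L : Word X)
    (hα : ∀ q ∈ pathVertices L c, ∀ x, α x q = ψ (FreeGroup.of x)) (a : A) :
    twistedAction α (FreeGroup.mk L) (c, a) =
      (FreeGroup.mk L • c, ψ (FreeGroup.mk L) * a) := by
  induction L with
  | nil => simp [← FreeGroup.one_eq_mk]
  | cons s L ih =>
    have ih := ih fun q hq ↦ hα q (pathVertices_subset_cons s L c hq)
    have hsource := hα _ (pathVertices_subset_cons s L c (smul_mem_pathVertices L c))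
    have htarget := hα _ (smul_mem_pathVertices (s :: L) c)
    obtain ⟨x, _ | _⟩ := s
    · have hcons : FreeGroup.mk ((x, false) :: L) = (FreeGroup.of x)⁻¹ * FreeGroup.mk L := rfl
      rw [hcons, mul_smul] at htarget
      rw [hcons, map_mul, Equiv.Perm.mul_apply, ih, twistedAction_of_inv_apply, htarget, mul_smul,
        map_mul, map_inv, mul_assoc]
    · have hcons : FreeGroup.mk ((x, true) :: L) = FreeGroup.of x * FreeGroup.mk L := rfl
      rw [hcons, map_mul, Equiv.Perm.mul_apply, ih, twistedAction_of_apply, hsource, mul_smul,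
        map_mul, mul_assoc]

end Labelling

/-! ### Cutting the Schreier graph along a set of vertices -/

section Cut

variable {G : Type*} [Group G] {φ : FreeGroup X →* G} {S : Set Q} {c : Q} {L : Word X}

open Classical in
/-- The edge labelling that agrees with `φ` on the edges starting in `S` and is trivial on all
others. -/
noncomputable def cutLabel (φ : FreeGroup X →* G) (S : Set Q) (x : X) (q : Q) : G :=
  if q ∈ S then φ (FreeGroup.of x) else 1

lemma twistedAction_cutLabel_of_subset (hS : pathVertices L c ⊆ S) (a : G) :
    twistedAction (cutLabel φ S) (FreeGroup.mk L) (c, a) =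
      (FreeGroup.mk L • c, φ (FreeGroup.mk L) * a) :=
  twistedAction_mk_of_label_eq L (fun _ hq _ ↦ if_pos (hS hq)) a

lemma twistedAction_cutLabel_of_disjoint (hS : Disjoint (pathVertices L c) S) (a : G) :
    twistedAction (cutLabel φ S) (FreeGroup.mk L) (c, a) = (FreeGroup.mk L • c, a) := by
  simpa using twistedAction_mk_of_label_eq (α := cutLabel φ S) (ψ := 1) L
    (fun _ hq _ ↦ if_neg (Set.disjoint_left.1 hS hq)) a

lemma mem_fibreFixer_cutLabel_of_disjoint (hloop : FreeGroup.mk L • c = c)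
    (hS : Disjoint (pathVertices L c) S) : FreeGroup.mk L ∈ fibreFixer (cutLabel φ S) c :=
  mem_fibreFixer.2 fun a ↦ by rw [twistedAction_cutLabel_of_disjoint hS, hloop]

lemma mem_fibreFixer_cutLabel_of_subset (hloop : FreeGroup.mk L • c = c)
    (hφ : φ (FreeGroup.mk L) = 1) (hS : pathVertices L c ⊆ S) :
    FreeGroup.mk L ∈ fibreFixer (cutLabel φ S) c :=
  mem_fibreFixer.2 fun a ↦ by rw [twistedAction_cutLabel_of_subset hS, hloop, hφ, one_mul]

lemma map_eq_one_of_mem_fibreFixer_cutLabel (hS : pathVertices L c ⊆ S)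
    (hL : FreeGroup.mk L ∈ fibreFixer (cutLabel φ S) c) : φ (FreeGroup.mk L) = 1 := by
  have hfix := mem_fibreFixer.1 hL 1
  rw [twistedAction_cutLabel_of_subset hS, mul_one] at hfix
  exact congrArg Prod.snd hfix

variable {k M : ℕ} {u v : Word X} {γ : FreeGroup X} {w : Fin k → FreeGroup X} {ρ : Fin k → Word X}

lemma map_eq_one_of_separated
    (hprod : γ * FreeGroup.mk u * γ⁻¹ * (FreeGroup.mk v)⁻¹ =
      (List.ofFn fun i ↦ w i * FreeGroup.mk (ρ i) * (w i)⁻¹).prod)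
    (hu : FreeGroup.mk u • γ⁻¹ • c = γ⁻¹ • c)
    (hρ : ∀ i, FreeGroup.mk (ρ i) • (w i)⁻¹ • c = (w i)⁻¹ • c)
    (hφρ : ∀ i, φ (FreeGroup.mk (ρ i)) = 1)
    (huS : Disjoint (pathVertices u (γ⁻¹ • c)) S) (hvS : pathVertices v c ⊆ S)
    (hρS : ∀ i, pathVertices (ρ i) ((w i)⁻¹ • c) ⊆ S ∨
      Disjoint (pathVertices (ρ i) ((w i)⁻¹ • c)) S) :
    φ (FreeGroup.mk v) = 1 := by
  have hu_mem : γ * FreeGroup.mk u * γ⁻¹ ∈ fibreFixer (cutLabel φ S) c :=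
    conj_mem_fibreFixer (mem_fibreFixer_cutLabel_of_disjoint hu huS)
  have hρ_mem (i) : w i * FreeGroup.mk (ρ i) * (w i)⁻¹ ∈ fibreFixer (cutLabel φ S) c :=
    conj_mem_fibreFixer <| (hρS i).elim (mem_fibreFixer_cutLabel_of_subset (hρ i) (hφρ i))
      (mem_fibreFixer_cutLabel_of_disjoint (hρ i))
  have hprod_mem : γ * FreeGroup.mk u * γ⁻¹ * (FreeGroup.mk v)⁻¹ ∈ fibreFixer (cutLabel φ S) c :=
    hprod ▸ list_prod_mem (List.forall_mem_ofFn_iff.2 hρ_mem)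
  refine map_eq_one_of_mem_fibreFixer_cutLabel hvS ?_
  rwa [Subgroup.mul_mem_cancel_left _ hu_mem, inv_mem_iff] at hprod_mem

lemma map_eq_one_or_reachableWithin
    (hprod : γ * FreeGroup.mk u * γ⁻¹ * (FreeGroup.mk v)⁻¹ =
      (List.ofFn fun i ↦ w i * FreeGroup.mk (ρ i) * (w i)⁻¹).prod)
    (hu : FreeGroup.mk u • γ⁻¹ • c = γ⁻¹ • c) (hv : FreeGroup.mk v • c = c)
    (hρ : ∀ i, FreeGroup.mk (ρ i) • (w i)⁻¹ • c = (w i)⁻¹ • c)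
    (hφρ : ∀ i, φ (FreeGroup.mk (ρ i)) = 1) (hM : ∀ i, (ρ i).length ≤ M) :
    φ (FreeGroup.mk v) = 1 ∨
      ReachableWithin X ((u.length + v.length) / 2 + M * k) (γ⁻¹ • c) c := by
  obtain ⟨S, hvS, hρS, hreach⟩ := exists_saturated_superset (c := c) Finset.univ
    (fun i _ d hd e he ↦ (ReachableWithin.of_mem_loop_of_mem_loop (hρ i) hd he).mono (hM i))
    (fun d hd ↦ ReachableWithin.of_mem_loop hv hd)
  rw [Finset.card_univ, Fintype.card_fin] at hreach
  by_cases huS : Disjoint (pathVertices u (γ⁻¹ • c)) S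
  · exact .inl <| map_eq_one_of_separated hprod hu hρ hφρ huS hvS fun i ↦ hρS i (Finset.mem_univ i)
  · obtain ⟨d, hdu, hdS⟩ := Set.not_disjoint_iff.1 huS
    exact .inr <| ((ReachableWithin.of_mem_loop hu hdu).trans (hreach d hdS).symm).mono (by omega)

end Cut

end SchreierGraph

/-! ### Short conjugators -/

lemma conj_eq_of_mul_inv_mem_zpowers {G : Type*} [Group G] {a b p g : G}
    (hg : g * a * g⁻¹ = b) (hp : p * g⁻¹ ∈ Subgroup.zpowers b) : p * a * p⁻¹ = b := by
  obtain ⟨m, hm⟩ := Subgroup.mem_zpowers_iff.1 hp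
  obtain rfl : p = b ^ m * g := eq_mul_of_mul_inv_eq hm.symm
  calc b ^ m * g * a * (b ^ m * g)⁻¹ = b ^ m * (g * a * g⁻¹) * (b ^ m)⁻¹ := by group
    _ = b := by rw [hg]; group

lemma exists_conjugator_length_le {X G : Type*} [Group G] {φ : FreeGroup X →* G} {k M : ℕ}
    {u v : Word X} {γ : FreeGroup X} {w : Fin k → FreeGroup X} {ρ : Fin k → Word X}
    (hγ : φ γ * φ (FreeGroup.mk u) * (φ γ)⁻¹ = φ (FreeGroup.mk v))
    (hprod : γ * FreeGroup.mk u * γ⁻¹ * (FreeGroup.mk v)⁻¹ =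
      (List.ofFn fun i ↦ w i * FreeGroup.mk (ρ i) * (w i)⁻¹).prod)
    (hφρ : ∀ i, φ (FreeGroup.mk (ρ i)) = 1) (hM : ∀ i, (ρ i).length ≤ M) :
    ∃ p : Word X, p.length ≤ (u.length + v.length) / 2 + M * k ∧
      φ (FreeGroup.mk p) * φ (FreeGroup.mk u) * (φ (FreeGroup.mk p))⁻¹ = φ (FreeGroup.mk v) := by
  let H : Subgroup (FreeGroup X) := (Subgroup.zpowers (φ (FreeGroup.mk v))).comap φ
  let c : FreeGroup X ⧸ H := (1 : FreeGroup X)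
  have smul_c_eq_iff (g : FreeGroup X) :
      g • c = c ↔ φ g ∈ Subgroup.zpowers (φ (FreeGroup.mk v)) := by
    rw [← MulAction.mem_stabilizer_iff, MulAction.stabilizer_quotient, Subgroup.mem_comap]
  have smul_inv_smul_c_eq_iff (g h : FreeGroup X) :
      g • h⁻¹ • c = h⁻¹ • c ↔ φ h * φ g * (φ h)⁻¹ ∈ Subgroup.zpowers (φ (FreeGroup.mk v)) := by
    rw [eq_inv_smul_iff, smul_smul, smul_smul, smul_c_eq_iff, map_mul, map_mul, map_inv]
  have hv : FreeGroup.mk v • c = c := (smul_c_eq_iff _).2 (Subgroup.mem_zpowers _)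
  have hu : FreeGroup.mk u • γ⁻¹ • c = γ⁻¹ • c :=
    (smul_inv_smul_c_eq_iff _ _).2 (hγ ▸ Subgroup.mem_zpowers _)
  have hρ (i) : FreeGroup.mk (ρ i) • (w i)⁻¹ • c = (w i)⁻¹ • c :=
    (smul_inv_smul_c_eq_iff _ _).2 (by simp [hφρ i])
  rcases map_eq_one_or_reachableWithin hprod hu hv hρ hφρ hM with hv_one | ⟨p, hp, hpc⟩
  · have hu_one : φ (FreeGroup.mk u) = 1 := by rwa [hv_one, conj_eq_one_iff] at hγ
    exact ⟨[], Nat.zero_le _, by simp [hu_one, hv_one]⟩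
  · refine ⟨p, hp, conj_eq_of_mul_inv_mem_zpowers hγ ?_⟩
    rwa [smul_smul, smul_c_eq_iff, map_mul, map_inv] at hpc

/-! ### Area and annular area -/

section Area

variable {X : Type*} {R : Set (FreeGroup X)}

lemma exists_eq_conj_zpow {G : Type*} [Group G] {s : Set G} {y : G}
    (hy : y ∈ Group.conjugatesOfSet s ∨ y⁻¹ ∈ Group.conjugatesOfSet s) :
    ∃ (w r : G) (ε : ℤ), r ∈ s ∧ (ε = 1 ∨ ε = -1) ∧ y = w * r ^ ε * w⁻¹ := by
  simp only [Group.mem_conjugatesOfSet_iff, isConj_iff] at hy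
  rcases hy with ⟨r, hr, w, hw⟩ | ⟨r, hr, w, hw⟩
  · exact ⟨w, r, 1, hr, .inl rfl, by rw [zpow_one, hw]⟩
  · exact ⟨w, r, -1, hr, .inr rfl, by rw [zpow_neg_one, ← conj_inv, hw, inv_inv]⟩

lemma exists_isProdOfConjRels {g : FreeGroup X} (hg : proj R g = 1) :
    ∃ k, IsProdOfConjRels R k g := by
  have hmem : g ∈ Subgroup.normalClosure R := PresentedGroup.mk_eq_one_iff.1 hg
  rw [Subgroup.normalClosure, ← Subgroup.mem_toSubmonoid, Subgroup.closure_toSubmonoid] at hmem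
  obtain ⟨l, hl, rfl⟩ := Submonoid.exists_list_of_mem_closure hmem
  choose w r ε hr hε hget using fun i : Fin l.length ↦ exists_eq_conj_zpow (hl _ (l.get_mem i))
  exact ⟨l.length, w, r, ε, hr, hε, by simp only [← hget, List.ofFn_get]⟩

lemma isProdOfConjRels_area {g : FreeGroup X} (hg : proj R g = 1) :
    IsProdOfConjRels R (area R g) g :=
  Nat.sInf_mem (exists_isProdOfConjRels hg)

lemma IsProdOfConjRels.exists_words [DecidableEq X] {M k : ℕ} {g : FreeGroup X}
    (hg : IsProdOfConjRels R k g) (hM : ∀ r ∈ R, r.toWord.length ≤ M) :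
    ∃ (w : Fin k → FreeGroup X) (ρ : Fin k → Word X),
      (∀ i, proj R (FreeGroup.mk (ρ i)) = 1) ∧ (∀ i, (ρ i).length ≤ M) ∧
        g = (List.ofFn fun i ↦ w i * FreeGroup.mk (ρ i) * (w i)⁻¹).prod := by
  obtain ⟨w, r, ε, hr, hε, rfl⟩ := hg
  refine ⟨w, fun i ↦ (r i ^ ε i).toWord, fun i ↦ ?_, fun i ↦ ?_, ?_⟩
  · have hri : proj R (r i) = 1 := PresentedGroup.one_of_mem (hr i)
    rw [FreeGroup.mk_toWord, map_zpow, hri, one_zpow]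
  · rcases hε i with h | h <;> simpa [h, FreeGroup.toWord_inv] using hM _ (hr i)
  · simp only [FreeGroup.mk_toWord]

lemma exists_area_eq_annPair {u v : FreeGroup X} (huv : IsConj (proj R u) (proj R v)) :
    ∃ γ, proj R (γ * u * γ⁻¹) = proj R v ∧ annPair R u v = area R (γ * u * γ⁻¹ * v⁻¹) := by
  obtain ⟨a, ha⟩ := isConj_iff.1 huv
  obtain ⟨γ, rfl⟩ := PresentedGroup.mk_surjective R a
  exact Nat.sInf_mem (s := {A | ∃ γ, proj R (γ * u * γ⁻¹) = proj R v ∧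
    A = area R (γ * u * γ⁻¹ * v⁻¹)}) ⟨_, γ, by rwa [map_mul, map_mul, map_inv], rfl⟩

lemma exists_conjugator_length_le_annPair [DecidableEq X] {M : ℕ}
    (hM : ∀ r ∈ R, r.toWord.length ≤ M) {u v : Word X}
    (huv : IsConj (proj R (FreeGroup.mk u)) (proj R (FreeGroup.mk v))) :
    ∃ p : Word X, p.length ≤
        (u.length + v.length) / 2 + M * annPair R (FreeGroup.mk u) (FreeGroup.mk v) ∧
      proj R (FreeGroup.mk p) * proj R (FreeGroup.mk u) * (proj R (FreeGroup.mk p))⁻¹ =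
        proj R (FreeGroup.mk v) := by
  obtain ⟨γ, hγ, harea⟩ := exists_area_eq_annPair huv
  have htriv : proj R (γ * FreeGroup.mk u * γ⁻¹ * (FreeGroup.mk v)⁻¹) = 1 := by
    rw [map_mul, map_inv, hγ, mul_inv_cancel]
  obtain ⟨w, ρ, hρ, hρM, hprod⟩ := (isProdOfConjRels_area htriv).exists_words hM
  rw [map_mul, map_mul, map_inv] at hγ
  exact harea ▸ exists_conjugator_length_le hγ hprod hρ hρM

/-- There are finitely many words of length at most `n`, so the supremum in `ann R n` is a genuine
one and not the junk value `0` of an unbounded set. -/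
lemma annPair_le_ann [Finite X] {n : ℕ} {u v : Word X} (hn : u.length + v.length ≤ n)
    (huv : IsConj (proj R (FreeGroup.mk u)) (proj R (FreeGroup.mk v))) :
    annPair R (FreeGroup.mk u) (FreeGroup.mk v) ≤ ann R n := by
  refine le_csSup (Set.Finite.bddAbove ?_) ⟨u, v, hn, huv, rfl⟩
  have hfin : {w : Word X | w.length ≤ n}.Finite := List.finite_length_le _ n
  refine (hfin.image2 (fun u v ↦ annPair R (FreeGroup.mk u) (FreeGroup.mk v)) hfin).subset ?_
  rintro _ ⟨u', v', hn', -, rfl⟩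
  exact Set.mem_image2_of_mem (le_of_add_le_left hn') (le_of_add_le_right hn')

end Area

/-- **Brick–Corson inequalities, part (2).** For any finitely presented group
`G = ⟨X ∣ R⟩`, if `M > 0` is the length of the longest defining relation, then for all
`n`, `CL(n) ≤ n/2 + M·Ann(n)`. -/
theorem brick_corson_cl_le {X : Type*} [Finite X] [DecidableEq X]
    (R : Set (FreeGroup X)) (hR : R.Finite)
    (M : ℕ) (hMpos : 0 < M)
    (hMub : ∀ r ∈ R, (FreeGroup.toWord r).length ≤ M)
    (hMmem : ∃ r ∈ R, (FreeGroup.toWord r).length = M)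
    (n : ℕ) :
    (CL R n : ℝ) ≤ (n : ℝ) / 2 + (M : ℝ) * (ann R n : ℝ) := by
  have hle : CL R n ≤ n / 2 + M * ann R n := by
    refine Nat.sInf_le fun u v hn huv ↦ ?_
    obtain ⟨p, hp, hconj⟩ := exists_conjugator_length_le_annPair hMub huv
    refine ⟨p, hp.trans ?_, hconj⟩
    gcongr
    exact annPair_le_ann hn huv
  calc (CL R n : ℝ) ≤ ((n / 2 + M * ann R n : ℕ) : ℝ) := mod_cast hle
    _ ≤ (n : ℝ) / 2 + (M : ℝ) * (ann R n : ℝ) := by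
      push_cast
      gcongr
      exact Nat.cast_div_le

end AnnDehn
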